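/- arXiv:2201.11436 — 2 statements merged into one kernel-verified Lean document; each statement's English description precedes it below -/
import Mathlib

section
/- Assume that π : X̂ → X is a covering map, that X is compact, and that there exists a continuous equivariant function θ on X̂. Let ĝ ∈ Ĝ and g = p(ĝ), and suppose g has a periodic point x ∈ X of period q ≥ 1 (g^q(x) = x) such that for some lift x̂ ∈ π⁻¹(x) one has ĝ^q(x̂) ≠ x̂. Then ĝ is undistorted in Ĝ: for every finitely generated subgroup Γ of Ĝ containing ĝ and every finite symmetric generating set S of Γ, lim_{n→∞} |ĝⁿ|_S / n > 0. -/
/-!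
The idea is to bound word length from below by the displacement of `θ`. An automorphism `f`
commutes with the action of `A`, so `y ↦ θ (f y) - θ y` is invariant along the fibres; since a
surjective covering map is a quotient map it descends to a continuous function on the compact
space `X`, and is therefore bounded (`exists_displacement_bound`). If `C` bounds the displacement
of every generator, telescoping along a word shows that an element of word norm `l` has
displacement at most `C * l` (`displacement_prod_le`).

At the periodic point, `gh ^ q` moves the lift `xh` within its fibre, so it sends `xh` to `T r xh`
with `r ≠ 0`, and then `gh ^ (q * k)` displaces `θ` by exactly `k * r` at `xh`. Hence the word norm
of `gh ^ (q * k)` is at least `k * |r| / C`. The limit of `wordNorm S (gh ^ n) / n` exists by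
Fekete's subadditive lemma, and it is evaluated along the multiples of `q`.
-/

open Function Filter Topology MeasureTheory

/-- The setting: a principal `A`-bundle-like structure, where `A` is an additive
subgroup of `ℝ` (intended to be `ℤ` or `ℝ` with the discrete topology).
`π : Xh → X` is a continuous surjection, `A` acts on `Xh` by homeomorphisms
`T r` commuting with `π`, and the action is free and transitive on each fiber. -/
structure BundleSetting (A : AddSubgroup ℝ) (Xh X : Type*)
    [TopologicalSpace Xh] [TopologicalSpace X] where
  π : Xh → X
  hπ_cont : Continuous π
  hπ_surj : Function.Surjective π
  T : A → Xh ≃ₜ Xh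
  hT_add : ∀ (r s : A) (xh : Xh), T (r + s) xh = T r (T s xh)
  hT_π : ∀ (r : A) (xh : Xh), π (T r xh) = π xh
  hT_transfree : ∀ xh yh : Xh, π xh = π yh → ∃! r : A, T r xh = yh

/-- `A` is either `ℤ` (the subgroup of `ℝ` generated by `1`) or all of `ℝ`. -/
def IsIntOrReal (A : AddSubgroup ℝ) : Prop :=
  A = AddSubgroup.zmultiples (1 : ℝ) ∨ A = ⊤

variable {A : AddSubgroup ℝ} {Xh X : Type*} [TopologicalSpace Xh] [TopologicalSpace X]

/-- A function `θ : Xh → ℝ` is equivariant if `θ (T r xh) = θ xh + r`. -/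
def BundleSetting.Equivariant (B : BundleSetting A Xh X) (θ : Xh → ℝ) : Prop :=
  ∀ (r : A) (xh : Xh), θ (B.T r xh) = θ xh + (r : ℝ)

/-- `gh` is a bundle automorphism covering the homeomorphism `g` of the base. -/
def BundleSetting.IsAuto (B : BundleSetting A Xh X) (gh : Xh ≃ₜ Xh) (g : X ≃ₜ X) : Prop :=
  (∀ (r : A) (xh : Xh), gh (B.T r xh) = B.T r (gh xh)) ∧
  (∀ xh : Xh, B.π (gh xh) = g (B.π xh))

/-- `ρ_x(f) = θ (f xh) - θ xh` for a chosen lift `xh` of `x` (independent of the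
choice of lift when `θ` is equivariant and `f` commutes with the `A`-action). -/
noncomputable def BundleSetting.ρ (B : BundleSetting A Xh X) (θ : Xh → ℝ)
    (f : Xh → Xh) (x : X) : ℝ :=
  θ (f (Function.surjInv B.hπ_surj x)) - θ (Function.surjInv B.hπ_surj x)

/-- The group structure on self-homeomorphisms, with `f * g = f ∘ g`. -/
instance : Group (Xh ≃ₜ Xh) where
  mul f g := g.trans f
  one := Homeomorph.refl Xh
  inv := Homeomorph.symm
  mul_assoc a b c := by ext x; rfl
  one_mul a := by ext x; rfl
  mul_one a := by ext x; rfl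
  inv_mul_cancel a := by ext x; exact a.symm_apply_apply x

/-- The word norm of `γ` with respect to a generating set `S`: the least length of
a word in elements of `S` whose product is `γ`. -/
noncomputable def wordNorm {G : Type*} [Group G] (S : Finset G) (γ : G) : ℕ :=
  sInf {l : ℕ | ∃ w : List G, w.length = l ∧ (∀ s ∈ w, s ∈ S) ∧ w.prod = γ}

theorem wordNorm_spec {G : Type*} [Group G] {S : Finset G} (hS : ∀ s ∈ S, s⁻¹ ∈ S) {γ : G}
    (hγ : γ ∈ Subgroup.closure (S : Set G)) :
    ∃ w : List G, w.length = wordNorm S γ ∧ (∀ s ∈ w, s ∈ S) ∧ w.prod = γ := by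
  rw [← Subgroup.mem_toSubmonoid, Subgroup.closure_toSubmonoid] at hγ
  obtain ⟨w, hw, hp⟩ := Submonoid.exists_list_of_mem_closure hγ
  refine Nat.sInf_mem (s := {l : ℕ | ∃ w : List G, w.length = l ∧ (∀ s ∈ w, s ∈ S) ∧ w.prod = γ})
    ⟨w.length, w, rfl, fun s hs => ?_, hp⟩
  rcases hw s hs with h | h
  · exact h
  · simpa using hS _ h

theorem wordNorm_mul_le {G : Type*} [Group G] {S : Finset G} (hS : ∀ s ∈ S, s⁻¹ ∈ S) {a b : G}
    (ha : a ∈ Subgroup.closure (S : Set G)) (hb : b ∈ Subgroup.closure (S : Set G)) :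
    wordNorm S (a * b) ≤ wordNorm S a + wordNorm S b := by
  obtain ⟨u, hul, hu, rfl⟩ := wordNorm_spec hS ha
  obtain ⟨v, hvl, hv, rfl⟩ := wordNorm_spec hS hb
  refine Nat.sInf_le ⟨u ++ v, by simp [hul, hvl], fun s hs => ?_, by simp⟩
  rcases List.mem_append.1 hs with h | h
  exacts [hu s h, hv s h]

/-- The displacement of `θ` under an automorphism is bounded, because it descends to a continuous
function on the compact base. -/
theorem exists_displacement_bound [CompactSpace X] (B : BundleSetting A Xh X)
    (hcov : IsCoveringMap B.π) {θ : Xh → ℝ} (hθc : Continuous θ) (hθ : B.Equivariant θ)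
    {f : Xh ≃ₜ Xh} {f0 : X ≃ₜ X} (hf : B.IsAuto f f0) :
    ∃ C : ℝ, ∀ y : Xh, |θ (f y) - θ y| ≤ C := by
  have hQ : IsQuotientMap B.π := hcov.isQuotientMap B.hπ_surj
  have hinv : ∀ y z, B.π y = B.π z → θ (f y) - θ y = θ (f z) - θ z := by
    intro y z h
    obtain ⟨r, rfl, -⟩ := B.hT_transfree y z h
    rw [hf.1, hθ, hθ]
    ring
  let d : X → ℝ := fun p =>
    θ (f (Function.surjInv B.hπ_surj p)) - θ (Function.surjInv B.hπ_surj p)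
  have hd : d ∘ B.π = fun y => θ (f y) - θ y := by
    ext y
    exact hinv _ _ (Function.surjInv_eq B.hπ_surj _)
  have hdc : Continuous d := by
    rw [hQ.continuous_iff, hd]
    exact (hθc.comp f.continuous).sub hθc
  obtain ⟨C, hC⟩ := (isCompact_univ (X := X)).exists_bound_of_continuousOn hdc.continuousOn
  refine ⟨C, fun y => ?_⟩
  have h := hC (B.π y) (Set.mem_univ _)
  rw [Real.norm_eq_abs] at h
  rwa [show d (B.π y) = θ (f y) - θ y from congrFun hd y] at h

theorem displacement_prod_le {θ : Xh → ℝ} {C : ℝ} (w : List (Xh ≃ₜ Xh))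
    (hw : ∀ s ∈ w, ∀ y : Xh, |θ (s y) - θ y| ≤ C) (y : Xh) :
    |θ (w.prod y) - θ y| ≤ C * w.length := by
  induction w with
  | nil =>
    have h : ([] : List (Xh ≃ₜ Xh)).prod y = y := rfl
    rw [h]
    simp
  | cons s w ih =>
    have h1 := hw s (by simp) (w.prod y)
    have h2 := ih fun t ht => hw t (by simp [ht])
    have h3 : (s :: w).prod y = s (w.prod y) := by rw [List.prod_cons]; rfl
    rw [h3, List.length_cons]
    push_cast
    have h4 := abs_sub_le (θ (s (w.prod y))) (θ (w.prod y)) (θ y)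
    linarith

theorem homeo_pow_apply (f : Xh ≃ₜ Xh) (n : ℕ) (y : Xh) : (f ^ n) y = (⇑f)^[n] y := by
  induction n with
  | zero => rfl
  | succ n ih =>
    rw [pow_succ', Function.iterate_succ_apply', ← ih]
    rfl

theorem BundleSetting.T_zero (B : BundleSetting A Xh X) (y : Xh) : B.T 0 y = y := by
  have h := B.hT_add 0 0 y
  rw [add_zero] at h
  exact ((B.T 0).injective h).symm

/-- over a compact base admitting a continuous equivariant θ, if the
base homeomorphism has a periodic point whose lift is not fixed by the
corresponding power of the bundle automorphism, then the automorphism is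
undistorted. -/
theorem stmt16 (hA : IsIntOrReal A) (B : BundleSetting A Xh X)
    (hcov : IsCoveringMap B.π) [CompactSpace X]
    (hθ : ∃ θ : Xh → ℝ, Continuous θ ∧ B.Equivariant θ)
    (gh : Xh ≃ₜ Xh) (g : X ≃ₜ X) (hgh : B.IsAuto gh g)
    (x : X) (q : ℕ) (hq : 1 ≤ q) (hx : (⇑g)^[q] x = x)
    (xh : Xh) (hxh : B.π xh = x) (hfix : (⇑gh)^[q] xh ≠ xh)
    (Γ : Subgroup (Xh ≃ₜ Xh)) (hΓ : ∀ f ∈ Γ, ∃ f0 : X ≃ₜ X, B.IsAuto f f0)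
    (hghΓ : gh ∈ Γ) (S : Finset (Xh ≃ₜ Xh)) (hSΓ : (S : Set (Xh ≃ₜ Xh)) ⊆ (Γ : Set (Xh ≃ₜ Xh)))
    (hSsymm : ∀ s ∈ S, s⁻¹ ∈ S) (hSgen : Subgroup.closure (S : Set (Xh ≃ₜ Xh)) = Γ) :
    ∃ τ : ℝ, 0 < τ ∧ Tendsto (fun n : ℕ => (wordNorm S (gh ^ n) : ℝ) / n) atTop (𝓝 τ) := by
  obtain ⟨θ, hθc, hθ⟩ := hθ
  -- `gh ^ q` moves `xh` to a different point `T r xh` of the same fibre.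
  have hπit : ∀ n : ℕ, B.π ((⇑gh)^[n] xh) = (⇑g)^[n] x := by
    intro n
    induction n with
    | zero => exact hxh
    | succ n ih => rw [Function.iterate_succ_apply', Function.iterate_succ_apply', hgh.2, ih]
  obtain ⟨r, hr, -⟩ := B.hT_transfree xh ((⇑gh)^[q] xh) (by rw [hπit, hx, hxh])
  have hr0 : (r : ℝ) ≠ 0 := by
    intro h
    have h0 : r = 0 := Subtype.ext h
    rw [h0, B.T_zero] at hr
    exact hfix hr.symm
  have hcomm : ∀ (n : ℕ) (y : Xh), (⇑gh)^[n] (B.T r y) = B.T r ((⇑gh)^[n] y) := by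
    intro n
    induction n with
    | zero => intro y; rfl
    | succ n ih => intro y; rw [Function.iterate_succ_apply, hgh.1, ih, Function.iterate_succ_apply]
  have hdisp : ∀ k : ℕ, θ ((gh ^ (q * k)) xh) - θ xh = k * (r : ℝ) := by
    intro k
    rw [homeo_pow_apply]
    induction k with
    | zero => simp
    | succ k ih =>
      rw [Nat.mul_succ, Function.iterate_add_apply, ← hr, hcomm, hθ]
      push_cast
      linarith
  -- A positive constant bounding the displacement of all generators at once.
  have hb : ∀ s : Xh ≃ₜ Xh, ∃ C : ℝ, s ∈ S → ∀ y, |θ (s y) - θ y| ≤ C := by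
    intro s
    by_cases hs : s ∈ S
    · obtain ⟨f0, hf0⟩ := hΓ s (hSΓ hs)
      obtain ⟨C, hC⟩ := exists_displacement_bound B hcov hθc hθ hf0
      exact ⟨C, fun _ => hC⟩
    · exact ⟨0, fun h => absurd h hs⟩
  choose c hc using hb
  obtain ⟨C, hC0, hC⟩ : ∃ C : ℝ, 0 < C ∧ ∀ s ∈ S, ∀ y, |θ (s y) - θ y| ≤ C := by
    refine ⟨∑ s ∈ S, |c s| + 1, by positivity, fun s hs y => ?_⟩
    have h1 := hc s hs y
    have h2 := Finset.single_le_sum (f := fun s => |c s|) (fun i _ => abs_nonneg _) hs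
    have h3 := le_abs_self (c s)
    linarith
  have hmem : ∀ n : ℕ, gh ^ n ∈ Subgroup.closure (S : Set (Xh ≃ₜ Xh)) := by
    intro n
    rw [hSgen]
    exact Γ.pow_mem hghΓ n
  have hlower : ∀ k : ℕ, k * |(r : ℝ)| ≤ C * wordNorm S (gh ^ (q * k)) := by
    intro k
    obtain ⟨w, hwl, hwS, hwp⟩ := wordNorm_spec hSsymm (hmem (q * k))
    have h := displacement_prod_le w (fun s hs => hC s (hwS s hs)) xh
    rwa [hwp, hdisp, abs_mul, Nat.abs_cast, hwl] at h
  have hsub : Subadditive (fun n : ℕ => (wordNorm S (gh ^ n) : ℝ)) := by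
    intro m n
    simp only [pow_add]
    exact_mod_cast wordNorm_mul_le hSsymm (hmem m) (hmem n)
  have hlim := hsub.tendsto_lim ⟨0, by rintro _ ⟨n, rfl⟩; positivity⟩
  have hq0 : (0 : ℝ) < q := by exact_mod_cast hq
  refine ⟨hsub.lim, ?_, hlim⟩
  have hpos : 0 < |(r : ℝ)| / (C * q) := by positivity
  refine lt_of_lt_of_le hpos ?_
  have hmul : Tendsto (fun k : ℕ => q * k) atTop atTop :=
    tendsto_id.const_mul_atTop' (by omega)
  refine ge_of_tendsto (hlim.comp hmul) ?_
  filter_upwards [eventually_gt_atTop 0] with k hk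
  have hk0 : (0 : ℝ) < k := by exact_mod_cast hk
  simp only [Function.comp_apply]
  push_cast
  rw [div_le_div_iff₀ (by positivity) (by positivity)]
  calc |(r : ℝ)| * (q * k) = (k * |(r : ℝ)|) * q := by ring
    _ ≤ (C * wordNorm S (gh ^ (q * k))) * q := mul_le_mul_of_nonneg_right (hlower k) hq0.le
    _ = wordNorm S (gh ^ (q * k)) * (C * q) := by ring
end

section
/- Assume that π : X̂ → X is a covering map, that X is compact, and that θ is a continuous equivariant function on X̂. Let μ be a Borel probability measure on X and let H = {ĝ ∈ Ĝ : p(ĝ) preserves μ}, a subgroup of Ĝ. Then the map F : H → ℝ defined by F(ĝ) = ∫_X ρ_x(ĝ) dμ(x) is a well-defined group homomorphism, and F(T_r) = r for every r ∈ A. (Consequently, the real Euler class of the central extension 0 → A → H → p(H) → 1 vanishes.) -/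
/-!
Any two lifts of a point of the base differ by some `T r`, so equivariance makes `ρ_x` independent
of the lift and `ρ(gh) ∘ π = θ ∘ gh - θ`. A surjective covering map is a quotient map, so `ρ(gh)` is
continuous on the compact base, hence integrable. The cocycle identity
`ρ_x(gh ∘ hh) = ρ_{h x}(gh) + ρ_x(hh)` integrates to additivity because `h` preserves `μ`, and
`ρ(T r)` is the constant `r`.
-/

open Function Filter Topology MeasureTheory

variable {A : AddSubgroup ℝ} {Xh X : Type*} [TopologicalSpace Xh] [TopologicalSpace X]

/-- The translation cocycle does not depend on the chosen lift: any two lifts of a point differ by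
some `T r`, which changes `θ (gh xh)` and `θ xh` by the same amount `r`. -/
theorem BundleSetting.ρ_π (B : BundleSetting A Xh X) {θ : Xh → ℝ} (hθ : B.Equivariant θ)
    {f : Xh → Xh} (hf : ∀ (r : A) (xh : Xh), f (B.T r xh) = B.T r (f xh)) (xh : Xh) :
    B.ρ θ f (B.π xh) = θ (f xh) - θ xh := by
  obtain ⟨r, hr, -⟩ := B.hT_transfree xh (Function.surjInv B.hπ_surj (B.π xh))
    (Function.surjInv_eq B.hπ_surj (B.π xh)).symm
  rw [BundleSetting.ρ, ← hr, hf, hθ, hθ]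
  ring

/-- Since a surjective covering map is a quotient map, continuity of `θ ∘ f - θ` upstairs descends
to continuity of the translation cocycle on the base. -/
theorem BundleSetting.continuous_ρ (B : BundleSetting A Xh X) (hcov : IsCoveringMap B.π)
    {θ : Xh → ℝ} (hc : Continuous θ) (hθ : B.Equivariant θ) {f : Xh → Xh} (hfc : Continuous f)
    (hf : ∀ (r : A) (xh : Xh), f (B.T r xh) = B.T r (f xh)) : Continuous (B.ρ θ f) := by
  rw [(hcov.isQuotientMap B.hπ_surj).continuous_iff]
  have h : B.ρ θ f ∘ B.π = fun xh => θ (f xh) - θ xh := funext (B.ρ_π hθ hf)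
  rw [h]
  exact (hc.comp hfc).sub hc

theorem BundleSetting.integrable_ρ (B : BundleSetting A Xh X) (hcov : IsCoveringMap B.π)
    [CompactSpace X] {θ : Xh → ℝ} (hc : Continuous θ) (hθ : B.Equivariant θ)
    [MeasurableSpace X] [BorelSpace X] (μ : Measure X) [IsProbabilityMeasure μ]
    {f : Xh → Xh} (hfc : Continuous f)
    (hf : ∀ (r : A) (xh : Xh), f (B.T r xh) = B.T r (f xh)) : Integrable (B.ρ θ f) μ :=
  (B.continuous_ρ hcov hc hθ hfc hf).integrable_of_hasCompactSupport
    (HasCompactSupport.of_compactSpace _)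

/-- The cocycle identity `ρ_x(f k) = ρ_{g x}(f) + ρ_x(k)`, where `k` covers `g`. -/
theorem BundleSetting.ρ_comp (B : BundleSetting A Xh X) {θ : Xh → ℝ} (hθ : B.Equivariant θ)
    {f k : Xh → Xh} {g : X → X} (hf : ∀ (r : A) (xh : Xh), f (B.T r xh) = B.T r (f xh))
    (hk : ∀ xh, B.π (k xh) = g (B.π xh)) (x : X) :
    B.ρ θ (f ∘ k) x = B.ρ θ f (g x) + B.ρ θ k x := by
  have hx : g x = B.π (k (Function.surjInv B.hπ_surj x)) := by
    rw [hk, Function.surjInv_eq B.hπ_surj]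
  rw [hx, B.ρ_π hθ hf]
  simp only [BundleSetting.ρ, Function.comp_apply]
  ring

/-- over a compact base with continuous equivariant `θ`, on the
subgroup of bundle automorphisms whose base homeomorphism preserves a Borel
probability measure `μ`, the mean translation number `F(gh) = ∫ ρ_x(gh) dμ` is a
well-defined (in particular integrable) group homomorphism with `F (T r) = r`. -/
theorem stmt18 (hA : IsIntOrReal A) (B : BundleSetting A Xh X)
    (hcov : IsCoveringMap B.π) [CompactSpace X]
    (θ : Xh → ℝ) (hc : Continuous θ) (hθ : B.Equivariant θ)
    [MeasurableSpace X] [BorelSpace X] (μ : Measure X) [IsProbabilityMeasure μ] :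
    (∀ (gh hh : Xh ≃ₜ Xh) (g h : X ≃ₜ X), B.IsAuto gh g → B.IsAuto hh h →
      MeasurePreserving (⇑g) μ μ → MeasurePreserving (⇑h) μ μ →
      Integrable (B.ρ θ ⇑gh) μ ∧
      ∫ x, B.ρ θ (⇑gh ∘ ⇑hh) x ∂μ = ∫ x, B.ρ θ ⇑gh x ∂μ + ∫ x, B.ρ θ ⇑hh x ∂μ) ∧
    (∀ r : A, ∫ x, B.ρ θ ⇑(B.T r) x ∂μ = (r : ℝ)) := by
  refine ⟨fun gh hh g h hg hh' _ hμ => ?_, fun r => ?_⟩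
  · have hig := B.integrable_ρ hcov hc hθ μ gh.continuous hg.1
    have hih := B.integrable_ρ hcov hc hθ μ hh.continuous hh'.1
    refine ⟨hig, ?_⟩
    rw [funext (B.ρ_comp hθ hg.1 hh'.2),
      integral_add (f := fun x => B.ρ θ gh (h x)) (hμ.integrable_comp_of_integrable hig) hih,
      hμ.integral_comp h.measurableEmbedding]
  · have hr : B.ρ θ (B.T r) = fun _ => (r : ℝ) := by
      funext x
      simp [BundleSetting.ρ, hθ r]
    simp [hr]
end
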